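/- Let S ⊊ V with |S| < M, let w^S be the minimizer of ℓ among weight vectors supported on S, and let j* ∈ V \ S maximize |(∇ℓ(w^S))_j| over j ∈ V \ S (the orthogonal matching pursuit selection rule). Then for every S* ⊆ V with 1 ≤ |S*| ≤ k and |S ∪ S*| ≤ M, E(S) − E(S ∪ {j*}) ≥ (γ_D/k)·(E(S) − E(S*)), where γ_D = λ/(λ + M·G²). -/

import Mathlib

open scoped BigOperators RealInnerProductSpace

/-- The regularized gradient-matching objective
`ℓ(w) = ‖∑ᵢ wᵢ gᵢ − b‖₂² + λ ∑ᵢ wᵢ²`. -/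
noncomputable def ell {V : Type*} [Fintype V] {d : ℕ}
    (g : V → EuclideanSpace ℝ (Fin d)) (b : EuclideanSpace ℝ (Fin d))
    (lam : ℝ) (w : V → ℝ) : ℝ :=
  ‖(∑ i, w i • g i) - b‖ ^ 2 + lam * ∑ i, (w i) ^ 2

/-- `E(S) = inf { ℓ(w) : w supported on S }`. -/
noncomputable def EErr {V : Type*} [Fintype V] {d : ℕ}
    (g : V → EuclideanSpace ℝ (Fin d)) (b : EuclideanSpace ℝ (Fin d))
    (lam : ℝ) (S : Finset V) : ℝ :=
  sInf {y | ∃ w : V → ℝ, (∀ i ∉ S, w i = 0) ∧ y = ell g b lam w}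

/-- The gradient of `ℓ`: `(∇ℓ(u))ⱼ = 2⟨∑ᵢ uᵢ gᵢ − b, gⱼ⟩ + 2λ uⱼ`. -/
noncomputable def gradEll {V : Type*} [Fintype V] {d : ℕ}
    (g : V → EuclideanSpace ℝ (Fin d)) (b : EuclideanSpace ℝ (Fin d))
    (lam : ℝ) (u : V → ℝ) (j : V) : ℝ :=
  2 * ⟪(∑ i, u i • g i) - b, g j⟫ + 2 * lam * u j

lemma ell_add {V : Type*} [Fintype V] {d : ℕ}
    (g : V → EuclideanSpace ℝ (Fin d)) (b : EuclideanSpace ℝ (Fin d))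
    (lam : ℝ) (u v : V → ℝ) :
    ell g b lam (u + v) = ell g b lam u + ∑ j, gradEll g b lam u j * v j
      + ‖∑ i, v i • g i‖ ^ 2 + lam * ∑ i, (v i) ^ 2 := by
  have h1 : (∑ i, (u + v) i • g i) - b = ((∑ i, u i • g i) - b) + ∑ i, v i • g i := by
    simp only [Pi.add_apply, add_smul, Finset.sum_add_distrib]
    abel
  have h2 : ∑ i, ((u + v) i) ^ 2 = ∑ i, (u i) ^ 2 + 2 * ∑ i, u i * v i + ∑ i, (v i) ^ 2 := by
    rw [Finset.mul_sum, ← Finset.sum_add_distrib, ← Finset.sum_add_distrib]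
    refine Finset.sum_congr rfl fun i _ => ?_
    simp only [Pi.add_apply]
    ring
  have h3 : ∑ j, gradEll g b lam u j * v j
      = 2 * ⟪(∑ i, u i • g i) - b, ∑ i, v i • g i⟫ + 2 * lam * ∑ i, u i * v i := by
    rw [inner_sum, Finset.mul_sum, Finset.mul_sum, ← Finset.sum_add_distrib]
    refine Finset.sum_congr rfl fun i _ => ?_
    rw [real_inner_smul_right]
    unfold gradEll
    ring
  rw [h3]
  unfold ell
  rw [h1, h2, norm_add_sq_real]
  ring

lemma ell_single {V : Type*} [Fintype V] [DecidableEq V] {d : ℕ}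
    (g : V → EuclideanSpace ℝ (Fin d)) (b : EuclideanSpace ℝ (Fin d))
    (lam : ℝ) (u : V → ℝ) (j : V) (t : ℝ) :
    ell g b lam (u + Pi.single j t) = ell g b lam u + gradEll g b lam u j * t
      + t ^ 2 * (‖g j‖ ^ 2 + lam) := by
  rw [ell_add]
  have h1 : ∑ i, gradEll g b lam u i * (Pi.single j t : V → ℝ) i = gradEll g b lam u j * t := by
    rw [Finset.sum_eq_single j] <;> simp +contextual [Pi.single_apply]
  have h2 : ∑ i, (Pi.single j t : V → ℝ) i • g i = t • g j := by
    rw [Finset.sum_eq_single j] <;> simp +contextual [Pi.single_apply]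
  have h3 : ∑ i, ((Pi.single j t : V → ℝ) i) ^ 2 = t ^ 2 := by
    rw [Finset.sum_eq_single j] <;> simp +contextual [Pi.single_apply]
  rw [h1, h2, h3, norm_smul, mul_pow, Real.norm_eq_abs, sq_abs]
  ring

lemma ell_nonneg {V : Type*} [Fintype V] {d : ℕ}
    (g : V → EuclideanSpace ℝ (Fin d)) (b : EuclideanSpace ℝ (Fin d))
    (lam : ℝ) (hlam : 0 < lam) (u : V → ℝ) : 0 ≤ ell g b lam u := by
  unfold ell
  have : 0 ≤ ∑ i, (u i) ^ 2 := Finset.sum_nonneg fun i _ => sq_nonneg _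
  positivity

lemma EErr_le {V : Type*} [Fintype V] {d : ℕ}
    (g : V → EuclideanSpace ℝ (Fin d)) (b : EuclideanSpace ℝ (Fin d))
    (lam : ℝ) (hlam : 0 < lam) (S : Finset V) (u : V → ℝ) (hu : ∀ i ∉ S, u i = 0) :
    EErr g b lam S ≤ ell g b lam u := by
  refine csInf_le ⟨0, ?_⟩ ⟨u, hu, rfl⟩
  rintro y ⟨w, _, rfl⟩
  exact ell_nonneg g b lam hlam w

lemma le_EErr {V : Type*} [Fintype V] {d : ℕ}
    (g : V → EuclideanSpace ℝ (Fin d)) (b : EuclideanSpace ℝ (Fin d))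
    (lam : ℝ) (S : Finset V) (c : ℝ)
    (h : ∀ u : V → ℝ, (∀ i ∉ S, u i = 0) → c ≤ ell g b lam u) :
    c ≤ EErr g b lam S := by
  refine le_csInf ⟨_, 0, fun _ _ => rfl, rfl⟩ ?_
  rintro y ⟨w, hw, rfl⟩
  exact h w hw

/-- OMP selection rule guarantee: if `j*` maximizes `|(∇ℓ(w^S))ⱼ|` over
`j ∈ V \ S`, then for every `S*` with `1 ≤ |S*| ≤ k` and `|S ∪ S*| ≤ M`,
`E(S) − E(S∪{j*}) ≥ (γ_D/k)·(E(S) − E(S*))` with `γ_D = λ/(λ + M G²)`. -/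
theorem omp_selection_progress
    {V : Type*} [Fintype V] [DecidableEq V] {d : ℕ} (hd : 1 ≤ d)
    (g : V → EuclideanSpace ℝ (Fin d)) (G : ℝ) (hG : ∀ i, ‖g i‖ ≤ G)
    (b : EuclideanSpace ℝ (Fin d)) (lam : ℝ) (hlam : 0 < lam)
    (M : ℕ) (hM : 0 < M) (k : ℕ)
    (S : Finset V) (hSV : S ⊂ Finset.univ) (hS : S.card < M)
    (wS : V → ℝ) (hwS_supp : ∀ i ∉ S, wS i = 0)
    (hwS_min : ∀ w' : V → ℝ, (∀ i ∉ S, w' i = 0) →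
      ell g b lam wS ≤ ell g b lam w')
    (jstar : V) (hjstar : jstar ∉ S)
    (hjmax : ∀ j : V, j ∉ S →
      |gradEll g b lam wS j| ≤ |gradEll g b lam wS jstar|)
    (Sstar : Finset V) (hSstar1 : 1 ≤ Sstar.card) (hSstark : Sstar.card ≤ k)
    (hcard : (S ∪ Sstar).card ≤ M) :
    EErr g b lam S - EErr g b lam (S ∪ {jstar}) ≥
      ((lam / (lam + M * G ^ 2)) / k) * (EErr g b lam S - EErr g b lam Sstar) := by
  have hES : EErr g b lam S = ell g b lam wS :=
    le_antisymm (EErr_le g b lam hlam S wS hwS_supp) (le_EErr g b lam S _ hwS_min)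
  have hgrad : ∀ j ∈ S, gradEll g b lam wS j = 0 := by
    intro j hj
    have hB : 0 < ‖g j‖ ^ 2 + lam := by positivity
    have h := hwS_min (wS + Pi.single j (-gradEll g b lam wS j / (2 * (‖g j‖ ^ 2 + lam)) : ℝ)) (by
      intro i hi
      have hij : i ≠ j := fun e => hi (e ▸ hj)
      simp [hwS_supp i hi, hij])
    rw [ell_single] at h
    generalize gradEll g b lam wS j = c at *
    generalize ‖g j‖ ^ 2 + lam = B at *
    have e : c * (-c / (2 * B)) + (-c / (2 * B)) ^ 2 * B = - (c ^ 2 / (4 * B)) := by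
      field_simp
      ring
    have h2 : c ^ 2 / (4 * B) ≤ 0 := by linarith
    by_contra hc
    have : 0 < c ^ 2 / (4 * B) := by positivity
    linarith
  set c := gradEll g b lam wS jstar with hc
  have hk : (0 : ℝ) < k := by exact_mod_cast (lt_of_lt_of_le hSstar1 hSstark)
  have hlow : ell g b lam wS - k * (c ^ 2 / (4 * lam)) ≤ EErr g b lam Sstar := by
    refine le_EErr g b lam Sstar _ fun w hw => ?_
    have e : w = wS + (w - wS) := by abel
    rw [e, ell_add]
    have hterm : ∀ j, (if j ∈ Sstar then -(c ^ 2 / (4 * lam)) else 0) ≤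
        gradEll g b lam wS j * (w - wS) j + lam * ((w - wS) j) ^ 2 := by
      intro j
      by_cases hjS : j ∈ S
      · rw [hgrad j hjS]
        have h1 : 0 ≤ c ^ 2 / (4 * lam) := by positivity
        have h2 : 0 ≤ lam * ((w - wS) j) ^ 2 := by positivity
        split_ifs <;> linarith
      · by_cases hjT : j ∈ Sstar
        · rw [if_pos hjT]
          have h1 := sq_le_sq.mpr (hjmax j hjS)
          generalize gradEll g b lam wS j = a at *
          generalize (w - wS) j = x
          have h2 : a * x + lam * x ^ 2 + a ^ 2 / (4 * lam) = (2 * lam * x + a) ^ 2 / (4 * lam) := by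
            field_simp
            ring
          have h3 : 0 ≤ (2 * lam * x + a) ^ 2 / (4 * lam) := by positivity
          have h4 : a ^ 2 / (4 * lam) ≤ c ^ 2 / (4 * lam) := by gcongr
          linarith
        · simp [hjT, hw j hjT, hwS_supp j hjS]
    have hsum := Finset.sum_le_sum fun j (_ : j ∈ Finset.univ) => hterm j
    rw [Finset.sum_add_distrib, ← Finset.mul_sum, Finset.sum_ite_mem, Finset.univ_inter,
      Finset.sum_const, nsmul_eq_mul] at hsum
    have h5 : (Sstar.card : ℝ) * (c ^ 2 / (4 * lam)) ≤ k * (c ^ 2 / (4 * lam)) := by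
      gcongr
    have h6 : 0 ≤ ‖∑ i, (w - wS) i • g i‖ ^ 2 := by positivity
    linarith
  have hMG : ‖g jstar‖ ^ 2 ≤ M * G ^ 2 := by
    have h1 : ‖g jstar‖ ^ 2 ≤ G ^ 2 := by
      have := hG jstar
      gcongr
    have h2 : (1 : ℝ) ≤ M := by exact_mod_cast hM
    nlinarith [sq_nonneg G]
  have hA : 0 < lam + M * G ^ 2 := by positivity
  have hup : EErr g b lam (S ∪ {jstar}) ≤ ell g b lam wS - c ^ 2 / (4 * (lam + M * G ^ 2)) := by
    refine (EErr_le g b lam hlam _ (wS + Pi.single jstar (-c / (2 * (lam + M * G ^ 2)) : ℝ)) ?_).trans ?_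
    · intro i hi
      simp only [Finset.mem_union, Finset.mem_singleton, not_or] at hi
      simp [hwS_supp i hi.1, hi.2]
    · rw [ell_single, ← hc]
      have hB : ‖g jstar‖ ^ 2 + lam ≤ lam + M * G ^ 2 := by linarith
      generalize lam + M * G ^ 2 = A at *
      have e : c * (-c / (2 * A)) + (-c / (2 * A)) ^ 2 * A = - (c ^ 2 / (4 * A)) := by
        field_simp
        ring
      have := mul_le_mul_of_nonneg_left hB (sq_nonneg (-c / (2 * A)))
      linarith
  rw [hES]
  have hfin : ((lam / (lam + M * G ^ 2)) / k) * (ell g b lam wS - EErr g b lam Sstar) ≤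
      ((lam / (lam + M * G ^ 2)) / k) * (k * (c ^ 2 / (4 * lam))) := by
    apply mul_le_mul_of_nonneg_left _ (by positivity)
    linarith
  have e : ((lam / (lam + M * G ^ 2)) / k) * (k * (c ^ 2 / (4 * lam))) =
      c ^ 2 / (4 * (lam + M * G ^ 2)) := by
    field_simp
  linarith
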